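/- For all real q, ρ₁, ρ₂ with |q| < 1, 0 < |ρ₁| < 1, 0 < |ρ₂| < 1, and all x, y, z ∈ S(q), the series Σ_{n=0}^∞ (ρ₂ⁿ/([n]_q!·(ρ₁²;q)_n))·P_n(x|z,ρ₁,q)·P_n(y|z,ρ₁/ρ₂,q) converges and equals the reciprocal of Σ_{n=0}^∞ (ρ₁ⁿ/([n]_q!·(ρ₂²;q)_n))·P_n(x|y,ρ₂,q)·P_n(z|y,ρ₂/ρ₁,q); in particular the latter sum is nonzero. -/

import Mathlib

/-!
Let `M_ρ(x, y) = ∑ j, ρ ^ j / [j]_q! * H_j(x|q) * H_j(y|q)` be the Poisson–Mehler kernel of the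
`q`-Hermite polynomials. The series with parameters `ρ₁, ρ₂` sums to `M_ρ₁(x, z) / M_ρ₂(x, y)`, and
exchanging `(ρ₁, z)` with `(ρ₂, y)` inverts this quotient.

To evaluate the series, replace `H_j(x)` by `H_{m+j}(x)` in `M_ρ₂(x, y)`. By a three-term recurrence
in `m` (Carlitz), the result is `P_m(x|y, ρ₂) / (ρ₂²; q)_m * M_ρ₂(x, y)`. Hence the series times
`M_ρ₂(x, y)` is a double series in `m` and `j`. Summing it along antidiagonals instead, the
connection formula that expands `H_N(z)` in products `P_m(z|y, ρ₂/ρ₁) * H_j(y)` gives `M_ρ₁(x, z)`.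
The connection formula holds because both generating functions solve the same linear
`q`-differential equation.

The kernel does not vanish: at `z = x`, where `M_ρ₁(x, x) > 0` for `ρ₁ = 1/2`, the same evaluation
exhibits `M_ρ₁(x, x)` as a series all of whose terms are multiples of `M_ρ₂(x, y)`.
-/

noncomputable section

open Finset

/-- The q-integer `[n]_q = 1 + q + ⋯ + q^{n-1}`. -/
def qInt (q : ℝ) (n : ℕ) : ℝ := ∑ i ∈ Finset.range n, q ^ i

/-- The q-factorial `[n]_q!`. -/
def qFact (q : ℝ) (n : ℕ) : ℝ := ∏ j ∈ Finset.range n, qInt q (j + 1)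

/-- The q-binomial coefficient. -/
def qBinom (q : ℝ) (n k : ℕ) : ℝ :=
  if k ≤ n then qFact q n / (qFact q (n - k) * qFact q k) else 0

/-- The finite q-Pochhammer symbol `(a;q)_n`. -/
def qPoch (a q : ℝ) (n : ℕ) : ℝ := ∏ j ∈ Finset.range n, (1 - a * q ^ j)

/-- The infinite q-Pochhammer symbol `(a;q)_∞`. -/
def qPochInf (a q : ℝ) : ℝ := ∏' j : ℕ, (1 - a * q ^ j)

/-- The q-Hermite polynomials `H_n(x|q)`. -/
def qHermite (q : ℝ) : ℕ → ℝ → ℝ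
  | 0, _ => 1
  | 1, x => x
  | n + 2, x => x * qHermite q (n + 1) x - qInt q (n + 1) * qHermite q n x

/-- The rescaled q-ultraspherical polynomials `R_n(x|β,q)`. -/
def qUltra (q β : ℝ) : ℕ → ℝ → ℝ
  | 0, _ => 1
  | 1, x => (1 - β) * x
  | n + 2, x => (1 - β * q ^ (n + 1)) * x * qUltra q β (n + 1) x
      - (1 - β ^ 2 * q ^ n) * qInt q (n + 1) * qUltra q β n x

/-- The Al-Salam–Chihara polynomials `P_n(x|y,ρ,q)`. -/
def ASC (q y ρ : ℝ) : ℕ → ℝ → ℝ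
  | 0, _ => 1
  | 1, x => x - ρ * y
  | n + 2, x => (x - ρ * y * q ^ (n + 1)) * ASC q y ρ (n + 1) x
      - (1 - ρ ^ 2 * q ^ n) * qInt q (n + 1) * ASC q y ρ n x

/-- The polynomials `B_n(y|q)` (q⁻¹-Hermite related). -/
def qB (q : ℝ) : ℕ → ℝ → ℝ
  | 0, _ => 1
  | 1, y => -y
  | n + 2, y => -q ^ (n + 1) * y * qB q (n + 1) y + q ^ n * qInt q (n + 1) * qB q n y

/-- The big q-Hermite polynomials `H_n(x|a,q)`. -/
def bigqHermite (q a : ℝ) : ℕ → ℝ → ℝ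
  | 0, _ => 1
  | 1, x => x - a
  | n + 2, x => (x - a * q ^ (n + 1)) * bigqHermite q a (n + 1) x
      - qInt q (n + 1) * bigqHermite q a n x

/-- The probabilistic Hermite polynomials `H_n(x)`. -/
def probHermite : ℕ → ℝ → ℝ
  | 0, _ => 1
  | 1, x => x
  | n + 2, x => x * probHermite (n + 1) x - (n + 1) * probHermite n x

/-- The probabilistic Hermite polynomials on ℂ. -/
def probHermiteC : ℕ → ℂ → ℂ
  | 0, _ => 1
  | 1, x => x
  | n + 2, x => x * probHermiteC (n + 1) x - (n + 1) * probHermiteC n x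

/-- The Chebyshev polynomials of the second kind. -/
def chebU : ℕ → ℝ → ℝ
  | 0, _ => 1
  | 1, x => 2 * x
  | n + 2, x => 2 * x * chebU (n + 1) x - chebU n x

/-- The Chebyshev polynomials of the first kind. -/
def chebT : ℕ → ℝ → ℝ
  | 0, _ => 1
  | 1, x => x
  | n + 2, x => 2 * x * chebT (n + 1) x - chebT n x

/-- `W_k(x,y,t|q)`. -/
def Wk (q x y t : ℝ) (k : ℕ) : ℝ :=
  (1 - t ^ 2 * q ^ (2 * k)) ^ 2 - (1 - q) * x * y * t * q ^ k * (1 + t ^ 2 * q ^ (2 * k))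
    + (1 - q) * t ^ 2 * q ^ (2 * k) * (x ^ 2 + y ^ 2)

/-- `V_k(x,a|q)`. -/
def Vk (q x a : ℝ) (k : ℕ) : ℝ :=
  1 - (1 - q) * a * x * q ^ k + (1 - q) * a ^ 2 * q ^ (2 * k)

/-- `L_k(x,a|q)`. -/
def Lk (q x a : ℝ) (k : ℕ) : ℝ :=
  (1 + a * q ^ k) ^ 2 - (1 - q) * x ^ 2 * a ^ 2 * q ^ k

/-- The support interval `S(q) = [-2/√(1-q), 2/√(1-q)]` for `|q| < 1`. -/
def Sq (q : ℝ) : Set ℝ := Set.Icc (-(2 / Real.sqrt (1 - q))) (2 / Real.sqrt (1 - q))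

open Filter Asymptotics PowerSeries Topology

section Basic

variable {q : ℝ}

lemma qInt_zero (q : ℝ) : qInt q 0 = 0 := by simp [qInt]

lemma one_sub_mul_qInt (q : ℝ) (n : ℕ) : (1 - q) * qInt q n = 1 - q ^ n :=
  mul_neg_geom_sum q n

lemma qInt_add (q : ℝ) (m n : ℕ) : qInt q (m + n) = qInt q m + q ^ m * qInt q n := by
  simp only [qInt, sum_range_add, mul_sum, pow_add]

lemma qInt_succ_ne_zero (hq : q ≠ -1) (n : ℕ) : qInt q (n + 1) ≠ 0 :=
  geom_sum_ne_zero hq n.succ_ne_zero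

lemma qInt_succ_pos (hq : -1 < q) (n : ℕ) : 0 < qInt q (n + 1) :=
  geom_sum_pos' (by linarith) n.succ_ne_zero

lemma qFact_zero (q : ℝ) : qFact q 0 = 1 := rfl

lemma qFact_succ (q : ℝ) (n : ℕ) : qFact q (n + 1) = qFact q n * qInt q (n + 1) :=
  prod_range_succ _ _

lemma qFact_pos (hq : -1 < q) (n : ℕ) : 0 < qFact q n :=
  prod_pos fun j _ => qInt_succ_pos hq j

lemma qPoch_succ (a q : ℝ) (n : ℕ) : qPoch a q (n + 1) = qPoch a q n * (1 - a * q ^ n) :=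
  prod_range_succ _ _

lemma qPoch_ne_zero {a : ℝ} (ha : |a| < 1) (hq : |q| ≤ 1) (n : ℕ) : qPoch a q n ≠ 0 := by
  refine prod_ne_zero_iff.mpr fun j _ => (sub_pos.mpr ((le_abs_self _).trans_lt ?_)).ne'
  rw [abs_mul, abs_pow]
  exact mul_lt_one_of_nonneg_of_lt_one_left (abs_nonneg a) ha (pow_le_one₀ (abs_nonneg q) hq)

-- The truncated index `n - 1` at `n = 0` is harmless here and below, since `[0]_q = 0`.
lemma qHermite_succ (q x : ℝ) (n : ℕ) :
    qHermite q (n + 1) x = x * qHermite q n x - qInt q n * qHermite q (n - 1) x := by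
  cases n <;> simp [qHermite, qInt_zero]

lemma ASC_succ (q y ρ x : ℝ) (n : ℕ) :
    ASC q y ρ (n + 1) x = (x - ρ * y * q ^ n) * ASC q y ρ n x
      - (1 - ρ ^ 2 * q ^ (n - 1)) * qInt q n * ASC q y ρ (n - 1) x := by
  cases n <;> simp [ASC, qInt_zero]

lemma ASC_zero_param (q y : ℝ) (n : ℕ) (x : ℝ) : ASC q y 0 n x = qHermite q n x := by
  induction n using Nat.twoStepInduction with
  | zero => rfl
  | one => simp [ASC, qHermite]
  | more n ih ih' => simp [ASC, qHermite, ih, ih']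

end Basic

/-! ### `q`-exponential generating functions -/

section GeneratingFunctions

variable {q : ℝ}

lemma rescale_C {R : Type*} [CommSemiring R] (r a : R) : rescale r (C a) = C a := by
  ext n
  cases n <;> simp [coeff_rescale, coeff_C]

/-- The Jackson derivative `f ↦ (f(X) - f(qX)) / ((1 - q) X)` of a formal power series, given by its
coefficients so that it also makes sense at `q = 1`. -/
def qDeriv (q : ℝ) (f : ℝ⟦X⟧) : ℝ⟦X⟧ := mk fun n => qInt q (n + 1) * coeff (n + 1) f

lemma coeff_qDeriv (q : ℝ) (f : ℝ⟦X⟧) (n : ℕ) :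
    coeff n (qDeriv q f) = qInt q (n + 1) * coeff (n + 1) f := coeff_mk _ _

lemma qDeriv_mul (q : ℝ) (f g : ℝ⟦X⟧) :
    qDeriv q (f * g) = qDeriv q f * g + rescale q f * qDeriv q g := by
  ext n
  have left := Nat.sum_antidiagonal_succ (n := n)
    (f := fun i => qInt q i.1 * coeff i.1 f * coeff i.2 g)
  have right := Nat.sum_antidiagonal_succ' (n := n)
    (f := fun i => q ^ i.1 * coeff i.1 f * (qInt q i.2 * coeff i.2 g))
  simp only [qInt_zero, zero_mul, mul_zero, zero_add] at left right
  simp only [map_add, coeff_qDeriv, coeff_mul, coeff_rescale]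
  rw [← left, ← right, mul_sum, ← sum_add_distrib]
  refine sum_congr rfl fun i hi => ?_
  rw [← mem_antidiagonal.mp hi, qInt_add]
  ring

lemma qDeriv_rescale (q r : ℝ) (f : ℝ⟦X⟧) :
    qDeriv q (rescale r f) = C r * rescale r (qDeriv q f) := by
  ext n
  simp only [coeff_qDeriv, coeff_rescale, coeff_C_mul]
  ring

lemma eq_of_qDeriv_eq_mul (hq : q ≠ -1) {f g h : ℝ⟦X⟧} (hf : qDeriv q f = h * f)
    (hg : qDeriv q g = h * g) (h0 : constantCoeff f = constantCoeff g) : f = g := by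
  ext n
  induction n using Nat.strong_induction_on with
  | _ n ih =>
    rcases n with _ | n
    · simpa using h0
    · refine mul_left_cancel₀ (qInt_succ_ne_zero hq n) ?_
      rw [← coeff_qDeriv, ← coeff_qDeriv, hf, hg, coeff_mul, coeff_mul]
      refine sum_congr rfl fun i hi => ?_
      rw [ih i.2 (by have := mem_antidiagonal.mp hi; omega)]

/-- The `q`-exponential generating function `∑ n, a n / [n]_q! * X ^ n` of a sequence. -/
def qEGF (q : ℝ) (a : ℕ → ℝ) : ℝ⟦X⟧ := mk fun n => a n / qFact q n

lemma coeff_qEGF (q : ℝ) (a : ℕ → ℝ) (n : ℕ) : coeff n (qEGF q a) = a n / qFact q n :=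
  coeff_mk _ _

lemma constantCoeff_qEGF (q : ℝ) (a : ℕ → ℝ) : constantCoeff (qEGF q a) = a 0 := by
  rw [← coeff_zero_eq_constantCoeff_apply, coeff_qEGF, qFact_zero, div_one]

lemma qDeriv_qEGF (hq : q ≠ -1) (a : ℕ → ℝ) :
    qDeriv q (qEGF q a) = qEGF q fun n => a (n + 1) := by
  ext n
  have := qInt_succ_ne_zero hq n
  rw [coeff_qDeriv, coeff_qEGF, coeff_qEGF, qFact_succ]
  field_simp

lemma X_mul_qEGF (hq : q ≠ -1) (a : ℕ → ℝ) :
    X * qEGF q a = qEGF q fun n => qInt q n * a (n - 1) := by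
  ext n
  rcases n with _ | n
  · simp [coeff_qEGF, qInt_zero]
  · have := qInt_succ_ne_zero hq n
    rw [coeff_succ_X_mul, coeff_qEGF, coeff_qEGF, qFact_succ, Nat.add_sub_cancel]
    field_simp

lemma rescale_qEGF (q r : ℝ) (a : ℕ → ℝ) :
    rescale r (qEGF q a) = qEGF q fun n => r ^ n * a n := by
  simp only [qEGF, rescale_mk, mul_div_assoc]

lemma qDeriv_qEGF_qHermite (hq : q ≠ -1) (x : ℝ) :
    qDeriv q (qEGF q fun n => qHermite q n x)
      = (C x - X) * qEGF q fun n => qHermite q n x := by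
  rw [qDeriv_qEGF hq, sub_mul, X_mul_qEGF hq]
  ext n
  simp only [map_sub, coeff_C_mul, coeff_qEGF, qHermite_succ]
  ring

lemma qDeriv_qEGF_ASC (hq : q ≠ -1) (y ρ x : ℝ) :
    qDeriv q (qEGF q fun n => ASC q y ρ n x)
      = (C x - X) * qEGF q (fun n => ASC q y ρ n x)
        - C ρ * (C y - C ρ * X) * rescale q (qEGF q fun n => ASC q y ρ n x) := by
  simp only [qDeriv_qEGF hq, rescale_qEGF, sub_mul, mul_sub, mul_assoc, X_mul_qEGF hq]
  ext n
  simp only [map_sub, coeff_C_mul, coeff_qEGF, ASC_succ]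
  ring

lemma qEGF_ASC_mul_rescale_qEGF_qHermite (hq : q ≠ -1) (y ρ x : ℝ) :
    qEGF q (fun n => ASC q y ρ n x) * rescale ρ (qEGF q fun n => qHermite q n y)
      = qEGF q fun n => qHermite q n x := by
  refine eq_of_qDeriv_eq_mul hq ?_ (qDeriv_qEGF_qHermite hq x) ?_
  · rw [qDeriv_mul, qDeriv_rescale, qDeriv_qEGF_ASC hq, qDeriv_qEGF_qHermite hq, map_mul, map_sub,
      rescale_X, rescale_C]
    ring
  · simp [rescale_qEGF, constantCoeff_qEGF, ASC, qHermite]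

lemma sum_antidiagonal_ASC_mul_qHermite (hq : q ≠ -1) (y ρ x : ℝ) (n : ℕ) :
    ∑ i ∈ antidiagonal n,
        ASC q y ρ i.1 x / qFact q i.1 * (ρ ^ i.2 * (qHermite q i.2 y / qFact q i.2))
      = qHermite q n x / qFact q n := by
  simpa only [coeff_mul, coeff_rescale, coeff_qEGF] using
    congrArg (coeff n) (qEGF_ASC_mul_rescale_qEGF_qHermite hq y ρ x)

end GeneratingFunctions

/-! ### Subexponential growth -/

section Growth

/-- A sequence grows subexponentially if it is `O(R ^ n)` for every `R > 1`. Such sequences are the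
admissible coefficients of geometric series of any ratio less than `1`. -/
def IsSubexponential {E : Type*} [Norm E] (a : ℕ → E) : Prop :=
  ∀ R : ℝ, 1 < R → a =O[atTop] fun n => R ^ n

lemma IsSubexponential.mul {A : Type*} [SeminormedRing A] {a b : ℕ → A}
    (ha : IsSubexponential a) (hb : IsSubexponential b) :
    IsSubexponential fun n => a n * b n := fun R hR => by
  have hR0 : 0 ≤ R := by linarith
  have h1 : 1 < √R := Real.lt_sqrt_of_sq_lt (by simpa using hR)
  refine ((ha _ h1).mul (hb _ h1)).congr_right fun n => ?_
  rw [← mul_pow, Real.mul_self_sqrt hR0]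

lemma IsSubexponential.comp_const_add {E : Type*} [Norm E] {a : ℕ → E} (ha : IsSubexponential a)
    (k : ℕ) : IsSubexponential fun n => a (k + n) := fun R hR => by
  have h : (fun n => a (k + n)) =O[atTop] fun n => R ^ k * R ^ n :=
    ((ha R hR).comp_tendsto (tendsto_add_atTop_nat k)).congr
      (fun n => congrArg a (add_comm n k)) (fun n => by rw [Function.comp_apply, add_comm, pow_add])
  exact h.trans (isBigO_const_mul_self _ _ _)

lemma IsSubexponential.summable_pow_mul_norm {E : Type*} [SeminormedAddCommGroup E] {a : ℕ → E}
    (ha : IsSubexponential a) {t : ℝ} (ht : |t| < 1) : Summable fun n => t ^ n * ‖a n‖ := by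
  obtain ⟨s, hts, hs1⟩ := exists_between ht
  have hs0 : 0 < s := (abs_nonneg t).trans_lt hts
  have hratio : ‖t * s⁻¹‖ < 1 := by
    rwa [norm_mul, norm_inv, Real.norm_of_nonneg hs0.le, Real.norm_eq_abs, ← div_eq_mul_inv,
      div_lt_one hs0]
  refine summable_of_isBigO_nat (summable_geometric_of_norm_lt_one hratio) ?_
  simpa only [mul_pow] using
    (isBigO_refl (fun n => t ^ n) atTop).mul (ha _ ((one_lt_inv₀ hs0).mpr hs1)).norm_left

lemma IsSubexponential.summable_prod {𝕜 : Type*} [NormedField 𝕜] [CompleteSpace 𝕜] {a b c : ℕ → 𝕜}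
    (ha : IsSubexponential a) (hb : IsSubexponential b) (hc : IsSubexponential c) {t r : 𝕜}
    (ht : ‖t‖ < 1) (hr : ‖r‖ < 1) :
    Summable fun p : ℕ × ℕ => t ^ p.1 * a p.1 * (r ^ p.2 * b p.2) * c (p.1 + p.2) := by
  obtain ⟨s, hs, hs1⟩ := exists_between (max_lt ht hr)
  obtain ⟨hts, hrs⟩ := max_lt_iff.mp hs
  have hs0 : 0 < s := (norm_nonneg t).trans_lt hts
  obtain ⟨K, -, hK⟩ := bound_of_isBigO_nat_atTop (hc _ ((one_lt_inv₀ hs0).mpr hs1))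
  have geometric {d : ℕ → 𝕜} (hd : IsSubexponential d) {u : 𝕜} (hus : ‖u‖ < s) :
      Summable fun n => (‖u‖ / s) ^ n * ‖d n‖ :=
    hd.summable_pow_mul_norm (by rwa [abs_of_nonneg (by positivity), div_lt_one hs0])
  have majorant := ((geometric ha hts).mul_of_nonneg (geometric hb hrs)
    (fun _ => by positivity) (fun _ => by positivity)).mul_left K
  refine majorant.of_norm_bounded fun ⟨n, j⟩ => ?_
  calc ‖t ^ n * a n * (r ^ j * b j) * c (n + j)‖
      = ‖t‖ ^ n * ‖a n‖ * (‖r‖ ^ j * ‖b j‖) * ‖c (n + j)‖ := by simp only [norm_mul, norm_pow]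
    _ ≤ ‖t‖ ^ n * ‖a n‖ * (‖r‖ ^ j * ‖b j‖) * (K * ‖s⁻¹ ^ (n + j)‖) := by
        gcongr
        exact hK (by positivity)
    _ = K * ((‖t‖ / s) ^ n * ‖a n‖ * ((‖r‖ / s) ^ j * ‖b j‖)) := by
        rw [norm_pow, norm_inv, Real.norm_of_nonneg hs0.le]
        ring

lemma isBigO_pow_of_eventually_norm_succ_le {E : Type*} [SeminormedAddCommGroup E] {a : ℕ → E}
    {R : ℝ} (hR : 0 < R) (h : ∀ᶠ n in atTop, ‖a (n + 1)‖ ≤ R * ‖a n‖) :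
    a =O[atTop] fun n => R ^ n := by
  obtain ⟨N, hN⟩ := eventually_atTop.mp h
  refine .of_bound (‖a N‖ / R ^ N) ?_
  filter_upwards [eventually_ge_atTop N] with n hn
  obtain ⟨k, rfl⟩ := Nat.exists_eq_add_of_le hn
  calc ‖a (N + k)‖ ≤ R ^ k * ‖a N‖ :=
        le_geom (u := fun i => ‖a (N + i)‖) hR.le k fun i _ => hN (N + i) (Nat.le_add_right N i)
    _ = ‖a N‖ / R ^ N * ‖R ^ (N + k)‖ := by
        rw [norm_pow, Real.norm_of_nonneg hR.le, pow_add]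
        field_simp

lemma isSubexponential_of_tendsto_ratio {𝕜 : Type*} [NormedField 𝕜] {a c : ℕ → 𝕜}
    (ha : ∀ n, a (n + 1) = c n * a n) (hc : Tendsto c atTop (𝓝 1)) : IsSubexponential a := by
  intro R hR
  refine isBigO_pow_of_eventually_norm_succ_le (by linarith) ?_
  have hnorm : Tendsto (fun n => ‖c n‖) atTop (𝓝 1) := by simpa using hc.norm
  filter_upwards [hnorm.eventually_le_const hR] with n hn
  rw [ha, norm_mul]
  gcongr

/- Up to the perturbation `δ` this is a Jordan block. Conjugating by `diag(1, k)` with `k = 2 / ε`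
makes its off-diagonal entry small, so `A n + k * V n` grows at most by the factor `1 + ε`. -/
lemma isSubexponential_of_perturbed_jordan {A V δ : ℕ → ℝ} (hA0 : ∀ n, 0 ≤ A n)
    (hV0 : ∀ n, 0 ≤ V n) (hA : ∀ n, A (n + 1) ≤ A n + V n)
    (hV : ∀ n, V (n + 1) ≤ V n + δ n * (A n + V n)) (hδ : Tendsto δ atTop (𝓝 0)) :
    IsSubexponential A := by
  intro R hR
  obtain ⟨ε, hε, rfl⟩ : ∃ ε, 0 < ε ∧ R = 1 + ε := ⟨R - 1, by linarith, by ring⟩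
  set k := 2 / ε
  have hk : 0 < k := by positivity
  have hkε : k * ε = 2 := div_mul_cancel₀ 2 hε.ne'
  have hnorm : ∀ n, ‖A n + k * V n‖ = A n + k * V n := fun n =>
    Real.norm_of_nonneg (add_nonneg (hA0 n) (mul_nonneg hk.le (hV0 n)))
  have hE : (fun n => A n + k * V n) =O[atTop] fun n => (1 + ε) ^ n := by
    refine isBigO_pow_of_eventually_norm_succ_le (by linarith) ?_
    have hmin : 0 < min ε 1 / k := by positivity
    filter_upwards [hδ.eventually_le_const hmin] with n hn
    rw [le_div_iff₀ hk, le_min_iff] at hn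
    rw [hnorm, hnorm]
    calc A (n + 1) + k * V (n + 1) ≤ (A n + V n) + k * (V n + δ n * (A n + V n)) := by
          gcongr
          exacts [hA n, hV n]
      _ = A n + V n + k * V n + (δ n * k) * A n + (δ n * k) * V n := by ring
      _ ≤ A n + V n + k * V n + ε * A n + 1 * V n := by
          gcongr
          exacts [hA0 n, hn.1, hV0 n, hn.2]
      _ = (1 + ε) * (A n + k * V n) := by linear_combination -V n * hkε
  refine (IsBigO.of_norm_le fun n => ?_).trans hE
  rw [Real.norm_of_nonneg (hA0 n), ← hnorm]
  exact (le_add_of_nonneg_right (mul_nonneg hk.le (hV0 n))).trans_eq (hnorm n).symm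

lemma isSubexponential_of_perturbed_recurrence {𝕜 : Type*} [NormedField 𝕜] {u w : 𝕜}
    (hu : ‖u‖ ≤ 1) (hw : ‖w‖ ≤ 1) {a α β : ℕ → 𝕜}
    (ha : ∀ n, a (n + 2) = (u + w + α n) * a (n + 1) - (u * w + β n) * a n)
    (hα : Tendsto α atTop (𝓝 0)) (hβ : Tendsto β atTop (𝓝 0)) : IsSubexponential a := by
  have contract {s : 𝕜} (hs : ‖s‖ ≤ 1) (e : 𝕜) : ‖s * e‖ ≤ ‖e‖ :=
    (norm_mul_le s e).trans (mul_le_of_le_one_left (norm_nonneg e) hs)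
  -- Factoring the unperturbed recurrence as `(S - w) (S - u) a = 0`, with `S` the shift.
  set v : ℕ → 𝕜 := fun n => a (n + 1) - u * a n with hv
  have a_succ (n : ℕ) : a (n + 1) = u * a n + v n := by simp [hv]
  have v_succ (n : ℕ) : v (n + 1) = w * v n + (α n * a (n + 1) - β n * a n) := by
    simp only [hv, ha n]
    ring
  have norm_a_succ (n : ℕ) : ‖a (n + 1)‖ ≤ ‖a n‖ + ‖v n‖ := by
    rw [a_succ]
    exact (norm_add_le _ _).trans (by gcongr; exact contract hu _)
  have norm_v_succ (n : ℕ) : ‖v (n + 1)‖ ≤ ‖v n‖ + (‖α n‖ + ‖β n‖) * (‖a n‖ + ‖v n‖) :=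
    calc ‖v (n + 1)‖ ≤ ‖v n‖ + (‖α n‖ * ‖a (n + 1)‖ + ‖β n‖ * ‖a n‖) := by
          rw [v_succ, ← norm_mul, ← norm_mul]
          exact (norm_add_le _ _).trans (add_le_add (contract hw _) (norm_sub_le _ _))
      _ ≤ ‖v n‖ + (‖α n‖ * (‖a n‖ + ‖v n‖) + ‖β n‖ * (‖a n‖ + ‖v n‖)) := by
          gcongr
          exacts [norm_a_succ n, le_add_of_nonneg_right (norm_nonneg _)]
      _ = ‖v n‖ + (‖α n‖ + ‖β n‖) * (‖a n‖ + ‖v n‖) := by ring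
  have hδ : Tendsto (fun n => ‖α n‖ + ‖β n‖) atTop (𝓝 0) := by simpa using hα.norm.add hβ.norm
  exact fun R hR => isBigO_norm_left.mp (isSubexponential_of_perturbed_jordan
    (fun n => norm_nonneg (a n)) (fun n => norm_nonneg (v n)) norm_a_succ norm_v_succ hδ R hR)

lemma isSubexponential_of_perturbed_chebyshev {θ : ℝ} {a α β : ℕ → ℝ}
    (ha : ∀ n, a (n + 2) = (2 * Real.cos θ + α n) * a (n + 1) - (1 + β n) * a n)
    (hα : Tendsto α atTop (𝓝 0)) (hβ : Tendsto β atTop (𝓝 0)) : IsSubexponential a := by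
  have hsum : Complex.exp (θ * Complex.I) + Complex.exp (-θ * Complex.I) = 2 * Real.cos θ := by
    rw [Complex.ofReal_cos, Complex.two_cos]
  have hmul : Complex.exp (θ * Complex.I) * Complex.exp (-θ * Complex.I) = 1 := by
    rw [← Complex.exp_add, neg_mul, add_neg_cancel, Complex.exp_zero]
  have hnorm : ‖Complex.exp (-θ * Complex.I)‖ = 1 := by
    rw [← Complex.ofReal_neg, Complex.norm_exp_ofReal_mul_I]
  have h : IsSubexponential fun n => (a n : ℂ) :=
    isSubexponential_of_perturbed_recurrence (Complex.norm_exp_ofReal_mul_I θ).le hnorm.le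
      (α := fun n => (α n : ℂ)) (β := fun n => (β n : ℂ))
      (fun n => by rw [hsum, hmul]; exact_mod_cast congrArg Complex.ofReal (ha n))
      (by exact_mod_cast hα.ofReal) (by exact_mod_cast hβ.ofReal)
  exact fun R hR => Complex.isBigO_ofReal_left.mp (h R hR)

end Growth

section PolynomialGrowth

variable {q x : ℝ}

lemma sqrt_one_sub_pos (hq : q < 1) : 0 < √(1 - q) := Real.sqrt_pos.mpr (sub_pos.mpr hq)

lemma sqrt_one_sub_sq (hq : q < 1) : √(1 - q) ^ 2 = 1 - q := Real.sq_sqrt (sub_pos.mpr hq).le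

lemma exists_sqrt_mul_eq_two_mul_cos (hq : q < 1) (hx : x ∈ Sq q) :
    ∃ θ : ℝ, √(1 - q) * x = 2 * Real.cos θ := by
  have hs := sqrt_one_sub_pos hq
  have h : |√(1 - q) * x| ≤ 2 := by
    rw [abs_mul, abs_of_pos hs, mul_comm, ← le_div_iff₀ hs]
    exact abs_le.mpr hx
  obtain ⟨hlow, hup⟩ := abs_le.mp h
  refine ⟨Real.arccos (√(1 - q) * x / 2), ?_⟩
  rw [Real.cos_arccos (by linarith) (by linarith)]
  ring

lemma tendsto_pow_succ_nhds_zero (hq : |q| < 1) : Tendsto (fun n => q ^ (n + 1)) atTop (𝓝 0) :=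
  (tendsto_add_atTop_iff_nat 1).mpr (tendsto_pow_atTop_nhds_zero_of_abs_lt_one hq)

lemma isSubexponential_ASC (hq : |q| < 1) (hx : x ∈ Sq q) (y ρ : ℝ) :
    IsSubexponential fun n => √(1 - q) ^ n * ASC q y ρ n x := by
  have hq1 : q < 1 := (abs_lt.mp hq).2
  obtain ⟨θ, hθ⟩ := exists_sqrt_mul_eq_two_mul_cos hq1 hx
  have hpow := tendsto_pow_atTop_nhds_zero_of_abs_lt_one hq
  have hpow_succ := tendsto_pow_succ_nhds_zero hq
  refine isSubexponential_of_perturbed_chebyshev (θ := θ)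
    (α := fun n => -(√(1 - q) * ρ * y) * q ^ (n + 1))
    (β := fun n => (1 - ρ ^ 2 * q ^ n) * (1 - q ^ (n + 1)) - 1) (fun n => ?_) ?_ ?_
  · rw [← hθ, ← one_sub_mul_qInt, ASC_succ, Nat.add_sub_cancel]
    linear_combination (-(1 - ρ ^ 2 * q ^ n) * √(1 - q) ^ n * qInt q (n + 1) * ASC q y ρ n x)
      * sqrt_one_sub_sq hq1
  · simpa using hpow_succ.const_mul (-(√(1 - q) * ρ * y))
  · simpa using (((hpow.const_mul (ρ ^ 2)).const_sub 1).mul (hpow_succ.const_sub 1)).sub_const 1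

lemma isSubexponential_qHermite (hq : |q| < 1) (hx : x ∈ Sq q) :
    IsSubexponential fun n => √(1 - q) ^ n * qHermite q n x := by
  simpa only [ASC_zero_param] using isSubexponential_ASC hq hx 0 0

lemma isSubexponential_inv_qFact (hq : |q| < 1) :
    IsSubexponential fun n => ((1 - q) ^ n * qFact q n)⁻¹ := by
  refine isSubexponential_of_tendsto_ratio (c := fun n => (1 - q ^ (n + 1))⁻¹) (fun n => ?_) ?_
  · rw [← one_sub_mul_qInt, qFact_succ, ← mul_inv]
    ring
  · simpa using ((tendsto_pow_succ_nhds_zero hq).const_sub 1).inv₀ (by norm_num)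

lemma isSubexponential_ASC_div_qFact (hq : |q| < 1) (hx : x ∈ Sq q) (y ρ : ℝ) :
    IsSubexponential fun n => ASC q y ρ n x / (√(1 - q) ^ n * qFact q n) := by
  have hq1 : q < 1 := (abs_lt.mp hq).2
  have normalize (n : ℕ) : ASC q y ρ n x / (√(1 - q) ^ n * qFact q n)
      = √(1 - q) ^ n * ASC q y ρ n x * ((1 - q) ^ n * qFact q n)⁻¹ := by
    have hpow : (1 - q) ^ n = √(1 - q) ^ n * √(1 - q) ^ n := by
      rw [← mul_pow, ← sq, sqrt_one_sub_sq hq1]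
    rw [hpow]
    field_simp
  simpa only [normalize] using (isSubexponential_ASC hq hx y ρ).mul (isSubexponential_inv_qFact hq)

lemma isSubexponential_qHermite_div_qFact (hq : |q| < 1) (hx : x ∈ Sq q) :
    IsSubexponential fun n => qHermite q n x / (√(1 - q) ^ n * qFact q n) := by
  simpa only [ASC_zero_param] using isSubexponential_ASC_div_qFact hq hx 0 0

end PolynomialGrowth

/-! ### Shifted Poisson–Mehler series -/

section Mehler

variable {q ρ x y : ℝ}

/-- The terms of the Poisson–Mehler series of the `q`-Hermite polynomials, with the degree in `x`
raised by `m`. -/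
def mehlerTerm (q ρ x y : ℝ) (m j : ℕ) : ℝ :=
  ρ ^ j * qHermite q j y * qHermite q (m + j) x / qFact q j

/-- The Poisson–Mehler series with the degree in `x` raised by `m`; at `m = 0` it is the
Poisson–Mehler kernel. -/
def mehlerSum (q ρ x y : ℝ) (m : ℕ) : ℝ := ∑' j, mehlerTerm q ρ x y m j

lemma hasSum_mehlerTerm (hq : |q| < 1) (hρ : |ρ| < 1) (hx : x ∈ Sq q) (hy : y ∈ Sq q) (m : ℕ) :
    HasSum (mehlerTerm q ρ x y m) (mehlerSum q ρ x y m) := by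
  have hs := sqrt_one_sub_pos (abs_lt.mp hq).2
  have summable_norm := ((isSubexponential_qHermite_div_qFact hq hy).mul
    ((isSubexponential_qHermite hq hx).comp_const_add m)).summable_pow_mul_norm (abs_abs ρ ▸ hρ)
  have summable : Summable fun j => ρ ^ j * (qHermite q j y / (√(1 - q) ^ j * qFact q j)
      * (√(1 - q) ^ (m + j) * qHermite q (m + j) x)) :=
    .of_norm (by simpa only [norm_mul, norm_pow, Real.norm_eq_abs] using summable_norm)
  refine ((summable.mul_left (√(1 - q) ^ m)⁻¹).congr fun j => ?_).hasSum
  rw [mehlerTerm, pow_add]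
  field_simp

lemma hasSum_qInt_mul_div_qFact_iff (hq : q ≠ -1) {f : ℕ → ℝ} {s : ℝ} :
    HasSum (fun j => qInt q j * f j / qFact q j) s ↔ HasSum (fun j => f (j + 1) / qFact q j) s := by
  rw [← hasSum_nat_add_iff' 1]
  simp only [sum_range_one, qInt_zero, zero_mul, zero_div, sub_zero]
  refine iff_of_eq (congrArg (HasSum · s) (funext fun j => ?_))
  have := qInt_succ_ne_zero hq j
  rw [qFact_succ]
  field_simp

lemma hasSum_qInt_mul_qHermite_pred_left (hq : |q| < 1) (hρ : |ρ| < 1) (hx : x ∈ Sq q)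
    (hy : y ∈ Sq q) (m : ℕ) :
    HasSum (fun j => qInt q j * (ρ ^ j * qHermite q (j - 1) y * qHermite q (m + j) x) / qFact q j)
      (ρ * mehlerSum q ρ x y (m + 1)) := by
  refine (hasSum_qInt_mul_div_qFact_iff (abs_lt.mp hq).1.ne').mpr
    (((hasSum_mehlerTerm hq hρ hx hy (m + 1)).mul_left ρ).congr_fun fun j => ?_)
  rw [mehlerTerm, Nat.add_sub_cancel, add_assoc m 1 j, add_comm 1 j]
  ring

lemma hasSum_qInt_mul_qHermite_pred_right (hq : |q| < 1) (hρ : |ρ| < 1) (hx : x ∈ Sq q)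
    (hy : y ∈ Sq q) (m : ℕ) :
    HasSum (fun j => qInt q j * (ρ ^ j * qHermite q j y * qHermite q (m + j - 1) x) / qFact q j)
      (ρ * (y * mehlerSum q ρ x y m - ρ * mehlerSum q ρ x y (m + 1))) := by
  refine (hasSum_qInt_mul_div_qFact_iff (abs_lt.mp hq).1.ne').mpr
    (((((hasSum_mehlerTerm hq hρ hx hy m).mul_left y).sub
      (hasSum_qInt_mul_qHermite_pred_left hq hρ hx hy m)).mul_left ρ).congr_fun fun j => ?_)
  rw [mehlerTerm, qHermite_succ, ← add_assoc, Nat.add_sub_cancel]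
  ring

lemma mehlerSum_recurrence (hq : |q| < 1) (hρ : |ρ| < 1) (hx : x ∈ Sq q) (hy : y ∈ Sq q) (m : ℕ) :
    (1 - ρ ^ 2 * q ^ m) * mehlerSum q ρ x y (m + 1)
      = (x - ρ * y * q ^ m) * mehlerSum q ρ x y m - qInt q m * mehlerSum q ρ x y (m - 1) := by
  have hS := hasSum_mehlerTerm hq hρ hx hy
  have expanded := ((hS (m + 1)).add ((hS (m - 1)).mul_left (qInt q m))).add
    ((hasSum_qInt_mul_qHermite_pred_right hq hρ hx hy m).mul_left (q ^ m))
  have total := expanded.unique (((hS m).mul_left x).congr_fun fun j => ?_)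
  · linear_combination total
  · have pred : qInt q m * qHermite q (m - 1 + j) x = qInt q m * qHermite q (m + j - 1) x := by
      rcases m with _ | m
      · simp only [qInt_zero, zero_mul]
      · rw [Nat.add_sub_cancel, Nat.add_right_comm, Nat.add_sub_cancel]
    have step := qHermite_succ q x (m + j)
    rw [qInt_add] at step
    simp only [mehlerTerm]
    rw [Nat.add_right_comm m 1 j]
    linear_combination (ρ ^ j * qHermite q j y / qFact q j) * (step + pred)

lemma qPoch_mul_mehlerSum (hq : |q| < 1) (hρ : |ρ| < 1) (hx : x ∈ Sq q) (hy : y ∈ Sq q) (m : ℕ) :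
    qPoch (ρ ^ 2) q m * mehlerSum q ρ x y m = ASC q y ρ m x * mehlerSum q ρ x y 0 := by
  induction m using Nat.twoStepInduction with
  | zero => simp [qPoch, ASC]
  | one => simpa [qInt_zero, qPoch, ASC] using mehlerSum_recurrence hq hρ hx hy 0
  | more n ih ih' =>
    have recurrence := mehlerSum_recurrence hq hρ hx hy (n + 1)
    rw [qPoch_succ] at ih'
    rw [ASC_succ, qPoch_succ, qPoch_succ]
    rw [Nat.add_sub_cancel] at recurrence ⊢
    linear_combination qPoch (ρ ^ 2) q n * (1 - ρ ^ 2 * q ^ n) * recurrence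
      + (x - ρ * y * q ^ (n + 1)) * ih' - (1 - ρ ^ 2 * q ^ n) * qInt q (n + 1) * ih

end Mehler

/-! ### Evaluation of the kernel -/

section Kernel

variable {q ρ r x y z : ℝ}

lemma hasSum_sum_antidiagonal {A M : Type*} [AddMonoid A] [HasAntidiagonal A] [AddCommMonoid M]
    [TopologicalSpace M] [ContinuousAdd M] [RegularSpace M] {f : A × A → M} {s : M}
    (hf : HasSum f s) : HasSum (fun n => ∑ p ∈ antidiagonal n, f p) s := by
  refine ((HasAntidiagonal.sigmaAntidiagonalEquivProd.hasSum_iff.mpr hf).sigma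
    fun n => hasSum_fintype _).congr_fun fun n => ?_
  exact (sum_attach (antidiagonal n) f).symm

lemma summable_ASC_mul_mehlerTerm (hq : |q| < 1) (hρ : |ρ| < 1) (hrρ : |r * ρ| < 1) (hx : x ∈ Sq q)
    (hy : y ∈ Sq q) (hz : z ∈ Sq q) :
    Summable fun p : ℕ × ℕ =>
      ρ ^ p.1 * ASC q y r p.1 z / qFact q p.1 * mehlerTerm q (r * ρ) x y p.1 p.2 := by
  have hs := sqrt_one_sub_pos (abs_lt.mp hq).2
  refine ((isSubexponential_ASC_div_qFact hq hz y r).summable_prod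
    (isSubexponential_qHermite_div_qFact hq hy) (isSubexponential_qHermite hq hx) hρ hrρ).congr
    fun p => ?_
  rw [mehlerTerm, pow_add]
  field_simp

lemma sum_antidiagonal_ASC_mul_mehlerTerm (hq : q ≠ -1) (ρ r x y z : ℝ) (n : ℕ) :
    ∑ p ∈ antidiagonal n,
        ρ ^ p.1 * ASC q y r p.1 z / qFact q p.1 * mehlerTerm q (r * ρ) x y p.1 p.2
      = mehlerTerm q ρ x z 0 n := by
  rw [mehlerTerm, zero_add, mul_right_comm, mul_div_assoc,
    ← sum_antidiagonal_ASC_mul_qHermite hq y r z n, mul_sum]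
  refine sum_congr rfl fun p hp => ?_
  rw [← mem_antidiagonal.mp hp, mehlerTerm]
  ring

lemma hasSum_ASC_mul_mehlerSum (hq : |q| < 1) (hρ : |ρ| < 1) (hrρ : |r * ρ| < 1) (hx : x ∈ Sq q)
    (hy : y ∈ Sq q) (hz : z ∈ Sq q) :
    HasSum (fun n => ρ ^ n * ASC q y r n z / qFact q n * mehlerSum q (r * ρ) x y n)
      (mehlerSum q ρ x z 0) := by
  have double := (summable_ASC_mul_mehlerTerm hq hρ hrρ hx hy hz).hasSum
  have diagonals := hasSum_sum_antidiagonal double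
  simp only [sum_antidiagonal_ASC_mul_mehlerTerm (abs_lt.mp hq).1.ne'] at diagonals
  rw [← diagonals.unique (hasSum_mehlerTerm hq hρ hx hz 0)]
  exact double.prod_fiberwise fun n => (hasSum_mehlerTerm hq hrρ hx hy n).mul_left _

lemma hasSum_ASC_kernel_mul_mehlerSum (hq : |q| < 1) (hρ : |ρ| < 1) (hrρ : |r * ρ| < 1)
    (hx : x ∈ Sq q) (hy : y ∈ Sq q) (hz : z ∈ Sq q) :
    HasSum (fun n => ρ ^ n / (qFact q n * qPoch ((r * ρ) ^ 2) q n) * ASC q y (r * ρ) n x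
        * ASC q y r n z * mehlerSum q (r * ρ) x y 0)
      (mehlerSum q ρ x z 0) := by
  refine (hasSum_ASC_mul_mehlerSum hq hρ hrρ hx hy hz).congr_fun fun n => ?_
  have hsq : |(r * ρ) ^ 2| < 1 := by
    rw [abs_pow]
    exact pow_lt_one₀ (abs_nonneg _) hrρ two_ne_zero
  rw [eq_div_of_mul_eq (qPoch_ne_zero hsq hq.le n)
    ((mul_comm _ _).trans (qPoch_mul_mehlerSum hq hrρ hx hy n))]
  ring

lemma mehlerSum_self_pos (hq : |q| < 1) (hρ0 : 0 ≤ ρ) (hρ1 : ρ < 1) (hx : x ∈ Sq q) :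
    0 < mehlerSum q ρ x x 0 := by
  have nonneg (j : ℕ) : 0 ≤ mehlerTerm q ρ x x 0 j := by
    rw [mehlerTerm, zero_add, mul_assoc]
    have := qFact_pos (abs_lt.mp hq).1 j
    have := mul_self_nonneg (qHermite q j x)
    positivity
  exact (hasSum_mehlerTerm hq (by rwa [abs_of_nonneg hρ0]) hx hx 0).summable.tsum_pos nonneg 0
    (by simp [mehlerTerm, qFact_zero, qHermite])

lemma mehlerSum_zero_ne_zero (hq : |q| < 1) (hρ : |ρ| < 1) (hx : x ∈ Sq q) (hy : y ∈ Sq q) :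
    mehlerSum q ρ x y 0 ≠ 0 := by
  intro h
  have hhalf : 2 * ρ * (1 / 2) = ρ := by ring
  have kernel := hasSum_ASC_kernel_mul_mehlerSum (ρ := 1 / 2) (r := 2 * ρ) hq
    (by norm_num [abs_of_pos]) (by rwa [hhalf]) hx hy hx
  simp only [hhalf, h, mul_zero] at kernel
  have pos := mehlerSum_self_pos (ρ := 1 / 2) hq (by norm_num) (by norm_num) hx
  exact pos.ne (hasSum_zero.unique kernel)

lemma hasSum_ASC_kernel {ρ₁ ρ₂ : ℝ} (hq : |q| < 1) (hρ₁ : ρ₁ ≠ 0) (hρ₁' : |ρ₁| < 1) (hρ₂ : |ρ₂| < 1)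
    (hx : x ∈ Sq q) (hy : y ∈ Sq q) (hz : z ∈ Sq q) :
    HasSum (fun n => ρ₁ ^ n / (qFact q n * qPoch (ρ₂ ^ 2) q n) * ASC q y ρ₂ n x
        * ASC q y (ρ₂ / ρ₁) n z)
      (mehlerSum q ρ₁ x z 0 / mehlerSum q ρ₂ x y 0) := by
  have hdiv : ρ₂ / ρ₁ * ρ₁ = ρ₂ := div_mul_cancel₀ ρ₂ hρ₁
  have hne := mehlerSum_zero_ne_zero hq hρ₂ hx hy
  have kernel := hasSum_ASC_kernel_mul_mehlerSum (r := ρ₂ / ρ₁) hq hρ₁' (by rwa [hdiv]) hx hy hz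
  simp only [hdiv] at kernel
  simpa only [mul_div_cancel_right₀ _ hne] using kernel.div_const (mehlerSum q ρ₂ x y 0)

end Kernel

/-- reciprocal of the Al-Salam–Chihara kernel. -/
theorem ASC_kernel_reciprocal (q ρ₁ ρ₂ x y z : ℝ) (hq : |q| < 1)
    (h1 : 0 < |ρ₁|) (h1' : |ρ₁| < 1) (h2 : 0 < |ρ₂|) (h2' : |ρ₂| < 1)
    (hx : x ∈ Sq q) (hy : y ∈ Sq q) (hz : z ∈ Sq q) :
    (∑' n : ℕ, ρ₁ ^ n / (qFact q n * qPoch (ρ₂ ^ 2) q n) *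
        ASC q y ρ₂ n x * ASC q y (ρ₂ / ρ₁) n z) ≠ 0 ∧
    HasSum (fun n : ℕ => ρ₂ ^ n / (qFact q n * qPoch (ρ₁ ^ 2) q n) *
        ASC q z ρ₁ n x * ASC q z (ρ₁ / ρ₂) n y)
      (∑' n : ℕ, ρ₁ ^ n / (qFact q n * qPoch (ρ₂ ^ 2) q n) *
        ASC q y ρ₂ n x * ASC q y (ρ₂ / ρ₁) n z)⁻¹ := by
  have hρ₁ : ρ₁ ≠ 0 := abs_pos.mp h1
  have hρ₂ : ρ₂ ≠ 0 := abs_pos.mp h2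
  rw [(hasSum_ASC_kernel hq hρ₁ h1' h2' hx hy hz).tsum_eq, inv_div]
  exact ⟨div_ne_zero (mehlerSum_zero_ne_zero hq h1' hx hz) (mehlerSum_zero_ne_zero hq h2' hx hy),
    hasSum_ASC_kernel hq hρ₂ h2' h1' hx hz hy⟩
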